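/- A choice rule C on a finite set 𝒳 of contracts satisfies path independence if and only if C is rationalizable by some utility function and satisfies the substitutes condition. -/

import Mathlib

/-!
Let `C` be path independent. Call `Y` absorbed by `X` if `C (X ∪ Y) = C X`. Path independence makes
the family of absorbed sets monotone in `X` and equal for `X` and `C X`. If `X' ⊆ X` absorb the same
sets, then `X'` absorbs `X`, so `C X' = C X`. Hence ranking bundles lexicographically, first by the
number of sets they absorb and then by smaller cardinality, rationalizes `C`
(`PathIndependent.rationalizes`). Substitutability follows from
`C X' = C (C X ∪ (X' \ X)) ⊆ C X ∪ (X' \ X)` for `X ⊆ X'`.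

Conversely, a rationalizable rule satisfies irrelevance of rejected contracts, since two bundles each
available when the other is chosen must coincide. The substitutes condition gives
`C (X ∪ X') ⊆ C X ∪ X'`, so the contracts in `X \ C X` are irrelevant in `X ∪ X'`.
-/

open Finset

variable {α : Type*} [DecidableEq α] [Fintype α]

/-- `X − x + x'`, where `x'` may be `∅` (encoded as `none`). -/
def swapIn (X : Finset α) (x : α) (x' : Option α) : Finset α :=
  x'.elim (X.erase x) (fun a => insert a (X.erase x))

/-- `X' + x − x'`, where `x'` may be `∅` (encoded as `none`). -/
def swapOut (X' : Finset α) (x : α) (x' : Option α) : Finset α :=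
  x'.elim (insert x X') (fun a => (insert x X').erase a)

/-- A choice rule selects a subset of every available set. -/
def IsChoiceRule (C : Finset α → Finset α) : Prop :=
  ∀ X : Finset α, C X ⊆ X

def PathIndependent (C : Finset α → Finset α) : Prop :=
  ∀ X X' : Finset α, C (X ∪ X') = C (C X ∪ X')

def LawOfAggregateDemand (C : Finset α → Finset α) : Prop :=
  ∀ X X' : Finset α, X' ⊆ X → (C X').card ≤ (C X).card

def Rationalizes (u : Finset α → ℝ) (C : Finset α → Finset α) : Prop :=
  ∀ X X' : Finset α, X' ⊆ X → X' ≠ C X → u X' < u (C X)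

def OrdinalConcave (u : Finset α → ℝ) : Prop :=
  ∀ X X' : Finset α, ∀ x ∈ X \ X', ∃ x' : Option α,
    (∀ a : α, x' = some a → a ∈ X' \ X) ∧
    (u X < u (swapIn X x x') ∨ u X' < u (swapOut X' x x') ∨
      (u X = u (swapIn X x x') ∧ u X' = u (swapOut X' x x')))

def OrdinalConcavePlus (u : Finset α → ℝ) : Prop :=
  ∀ X X' : Finset α, ∀ x ∈ X \ X',
    (∃ x' : Option α, (∀ a : α, x' = some a → a ∈ X' \ X) ∧ u X < u (swapIn X x x')) ∨
    u X' < u (insert x X')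

def SizeRestrictedConcave (u : Finset α → ℝ) : Prop :=
  ∀ X X' : Finset α, X'.card < X.card → ∃ x ∈ X \ X',
    (u X < u (X.erase x) ∨ u X' < u (insert x X') ∨
      (u X = u (X.erase x) ∧ u X' = u (insert x X')))

def MNatConcave (u : Finset α → ℝ) : Prop :=
  ∀ X X' : Finset α, ∀ x ∈ X \ X', ∃ x' : Option α,
    (∀ a : α, x' = some a → a ∈ X' \ X) ∧
    u X + u X' ≤ u (swapIn X x x') + u (swapOut X' x x')

def Substitutes (C : Finset α → Finset α) : Prop :=
  ∀ X X' : Finset α, X ⊆ X' → C X' ∩ X ⊆ C X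

def IrrelevanceOfRejectedContracts (C : Finset α → Finset α) : Prop :=
  ∀ X X' : Finset α, X ⊆ X' → C X' ⊆ X → C X = C X'

/-- The sets `Y` that are absorbed by `X`: adding `Y` to `X` does not change the choice. -/
def absorbed (C : Finset α → Finset α) (X : Finset α) : Finset (Finset α) :=
  univ.filter fun Y => C (X ∪ Y) = C X

lemma mem_absorbed {C : Finset α → Finset α} {X Y : Finset α} :
    Y ∈ absorbed C X ↔ C (X ∪ Y) = C X := by
  simp [absorbed]

/-- A utility ranking bundles lexicographically: more absorbed sets first, then fewer contracts.
The weight `card α + 1` exceeds every possible difference in cardinality. -/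
def absorptionUtility (C : Finset α → Finset α) (X : Finset α) : ℝ :=
  ((Fintype.card α : ℝ) + 1) * ((absorbed C X).card : ℝ) - (X.card : ℝ)

lemma PathIndependent.choice_idem {C : Finset α → Finset α} (h : PathIndependent C)
    (X : Finset α) : C (C X) = C X := by
  simpa using (h X ∅).symm

lemma PathIndependent.absorbed_choice {C : Finset α → Finset α} (h : PathIndependent C)
    (X : Finset α) : absorbed C (C X) = absorbed C X := by
  ext Y
  rw [mem_absorbed, mem_absorbed, ← h X Y, h.choice_idem]

lemma PathIndependent.absorbed_mono {C : Finset α → Finset α} (h : PathIndependent C)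
    {X' X : Finset α} (hX : X' ⊆ X) : absorbed C X' ⊆ absorbed C X := by
  intro Y hY
  rw [mem_absorbed] at hY ⊢
  calc C (X ∪ Y) = C ((X' ∪ Y) ∪ X) := by
        congr 1
        ext a
        have := @hX a
        simp only [mem_union]
        tauto
    _ = C (C X' ∪ X) := by rw [h, hY]
    _ = C X := by rw [← h, union_eq_right.2 hX]

lemma PathIndependent.choice_eq_of_absorbed_eq {C : Finset α → Finset α}
    {X' X : Finset α} (hX : X' ⊆ X) (he : absorbed C X' = absorbed C X) : C X' = C X := by
  have hmem : X ∈ absorbed C X' := by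
    rw [he, mem_absorbed, union_self]
  rw [mem_absorbed, union_eq_right.2 hX] at hmem
  exact hmem.symm

lemma PathIndependent.rationalizes {C : Finset α → Finset α} (hC : IsChoiceRule C)
    (h : PathIndependent C) : Rationalizes (absorptionUtility C) C := by
  intro X X' hX hne
  unfold absorptionUtility
  rw [h.absorbed_choice]
  by_cases he : absorbed C X' = absorbed C X
  · have hsub : C X ⊆ X' := choice_eq_of_absorbed_eq hX he ▸ hC X'
    have hlt : (C X).card < X'.card := card_lt_card (hsub.ssubset_of_ne hne.symm)
    have hlt' : ((C X).card : ℝ) < X'.card := by exact_mod_cast hlt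
    rw [he]
    linarith
  · have hlt : (absorbed C X').card + 1 ≤ (absorbed C X).card :=
      card_lt_card ((h.absorbed_mono hX).ssubset_of_ne he)
    have hlt' : ((absorbed C X').card : ℝ) + 1 ≤ (absorbed C X).card := by exact_mod_cast hlt
    have hcard : ((C X).card : ℝ) ≤ Fintype.card α := by exact_mod_cast card_le_univ (C X)
    have hpos : (0 : ℝ) ≤ X'.card := by positivity
    have hmul := mul_le_mul_of_nonneg_left hlt'
      (by positivity : (0 : ℝ) ≤ (Fintype.card α : ℝ) + 1)
    linarith

lemma PathIndependent.substitutes {C : Finset α → Finset α} (hC : IsChoiceRule C)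
    (h : PathIndependent C) : Substitutes C := by
  intro X X' hX x hx
  rw [mem_inter] at hx
  have hx' : x ∈ C X ∪ X' \ X := by
    apply hC
    rw [← h, union_sdiff_of_subset hX]
    exact hx.1
  simpa [hx.2] using hx'

lemma Rationalizes.irrelevanceOfRejectedContracts {C : Finset α → Finset α}
    {u : Finset α → ℝ} (hC : IsChoiceRule C) (hu : Rationalizes u C) :
    IrrelevanceOfRejectedContracts C := by
  intro X X' hX hsub
  by_contra hne
  exact lt_asymm (hu X (C X') hsub (Ne.symm hne)) (hu X' (C X) ((hC X).trans hX) hne)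

theorem stmt15 (C : Finset α → Finset α) (hC : IsChoiceRule C) :
    PathIndependent C ↔
      ((∃ u : Finset α → ℝ, Rationalizes u C) ∧ Substitutes C) := by
  constructor
  · intro h
    exact ⟨⟨absorptionUtility C, h.rationalizes hC⟩, h.substitutes hC⟩
  · rintro ⟨⟨u, hu⟩, hs⟩ X X'
    refine (hu.irrelevanceOfRejectedContracts hC _ _
      (union_subset_union_left (hC X)) fun x hx => ?_).symm
    rcases mem_union.1 (hC _ hx) with hxX | hxX
    · exact mem_union_left _ (hs X _ subset_union_left (mem_inter.2 ⟨hx, hxX⟩))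
    · exact mem_union_right _ hxX
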